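/- (Zero postselection probability for traceless noise.) Let n : ℕ and let l : List (Fin n → Fin 4) be a duplicate-free list containing every a : Fin n → Fin 4. If E is a complex matrix indexed by (Fin n → Fin 2) with trace E = 0, then l.foldl (fun M a => (P_a * M * P_a + M)/2) E = 0. Consequently, for a noise map all of whose Kraus operators are traceless, every Kraus operator of the fully checked map is the zero matrix and the probability of postselecting on all ancilla outcomes 0 is zero. -/

import Mathlib

open Matrix Complex Kronecker

noncomputable def pauli : Fin 4 → Matrix (Fin 2) (Fin 2) ℂ
  | 0 => !![1, 0; 0, 1]
  | 1 => !![0, 1; 1, 0]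
  | 2 => !![0, -Complex.I; Complex.I, 0]
  | 3 => !![1, 0; 0, -1]

noncomputable def PauliString {n : ℕ} (a : Fin n → Fin 4) :
    Matrix (Fin n → Fin 2) (Fin n → Fin 2) ℂ :=
  Matrix.of fun f g => ∏ i, pauli (a i) (f i) (g i)

/-!
A layer of checks by a Pauli string `P` keeps the trace and projects onto the commutant of `P`. As
Pauli strings commute up to sign, a layer does not undo the projections made before it, so after
all layers the matrix commutes with every check. Commuting with the strings that have a single
letter `Z` makes it diagonal, and commuting with those that have a single letter `X` makes its
diagonal constant. It is thus the scalar matrix with the trace of `E`, and `2 n` of the checks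
suffice for this.
-/

section CheckMap

/-- The elements `u` and `v` commute or anticommute. The sign is a unit of `ℤ`, so that the signs
of the factors of a tensor product can be multiplied. -/
def CommuteUpToSign {A : Type*} [Ring A] (u v : A) : Prop :=
  ∃ s : ℤˣ, u * v = s • (v * u)

variable (K : Type*) {A ι : Type*} [Field K] [Ring A] [Algebra K A]

/-- The Kraus operator into which one layer of checks by `u`, postselected on outcome `0`,
transforms `M`. If `u * u = 1` and `2` is invertible in `K`, this is a projection onto the commutant
of `u`. -/
def checkMap (u M : A) : A :=
  ((1 : K) / 2) • (u * M * u + M)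

theorem commute_checkMap_self {u : A} (hu : u * u = 1) (M : A) : Commute u (checkMap K u M) := by
  have hsum : Commute u (u * M * u + M) := by
    simp only [commute_iff_eq, mul_add, add_mul, ← mul_assoc, hu, one_mul]
    rw [mul_assoc (u * M), hu, mul_one, add_comm]
  exact hsum.smul_right _

theorem commute_checkMap_of_commute {u v M : A} (hvu : CommuteUpToSign v u)
    (hM : Commute v M) : Commute v (checkMap K u M) := by
  obtain ⟨s, hs⟩ := hvu
  have hconj : Commute v (u * M * u) :=
    calc v * (u * M * u) = v * u * M * u := by simp only [mul_assoc]
      _ = s • (u * (v * M) * u) := by simp only [hs, smul_mul_assoc, mul_assoc]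
      _ = s • (u * M * (v * u)) := by simp only [hM.eq, mul_assoc]
      _ = u * M * u * v := by
        rw [hs, mul_smul_comm, smul_smul, Int.units_mul_self, one_smul]
        simp only [mul_assoc]
  exact (hconj.add_right hM).smul_right _

theorem commute_foldl_checkMap_of_commute {P : ι → A} {v : A}
    (hv : ∀ a, CommuteUpToSign v (P a)) (l : List ι) {M : A} (hM : Commute v M) :
    Commute v (l.foldl (fun M a => checkMap K (P a) M) M) := by
  induction l generalizing M with
  | nil => exact hM
  | cons a _ ih => exact ih (commute_checkMap_of_commute K (hv a) hM)

theorem commute_foldl_checkMap_of_mem {P : ι → A} {a : ι} (ha : P a * P a = 1)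
    (hP : ∀ b, CommuteUpToSign (P a) (P b)) {l : List ι} (hal : a ∈ l) (M : A) :
    Commute (P a) (l.foldl (fun M b => checkMap K (P b) M) M) := by
  induction l generalizing M with
  | nil => simp at hal
  | cons b l ih =>
    rcases List.mem_cons.mp hal with rfl | hal
    · exact commute_foldl_checkMap_of_commute K hP l (commute_checkMap_self K ha M)
    · exact ih hal _

variable {K} {m : Type*} [Fintype m] [DecidableEq m] [NeZero (2 : K)]

theorem trace_checkMap {u : Matrix m m K} (hu : u * u = 1) (M : Matrix m m K) :
    (checkMap K u M).trace = M.trace := by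
  rw [checkMap, trace_smul, trace_add, trace_mul_comm, ← mul_assoc, hu, one_mul, ← two_mul,
    smul_eq_mul, ← mul_assoc, one_div_mul_cancel two_ne_zero, one_mul]

theorem trace_foldl_checkMap {P : ι → Matrix m m K} (hP : ∀ a, P a * P a = 1) (l : List ι)
    (M : Matrix m m K) : (l.foldl (fun M a => checkMap K (P a) M) M).trace = M.trace := by
  induction l generalizing M with
  | nil => rfl
  | cons a l ih => rw [List.foldl_cons, ih, trace_checkMap (hP a)]

end CheckMap

section PiKronecker

variable {ι R : Type*} {m : ι → Type*} [Fintype ι] [CommSemiring R]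

/-- The tensor product of a finite family of square matrices, indexed by the dependent functions
that choose an index of each factor. -/
def piKronecker (A : ∀ i, Matrix (m i) (m i) R) : Matrix (∀ i, m i) (∀ i, m i) R :=
  of fun f g => ∏ i, A i (f i) (g i)

theorem piKronecker_one [∀ i, DecidableEq (m i)] :
    piKronecker (1 : ∀ i, Matrix (m i) (m i) R) = 1 := by
  ext f g
  simp [piKronecker, one_apply, Finset.prod_ite_zero, funext_iff]

theorem piKronecker_smul {S : Type*} [CommMonoid S] [MulAction S R] [IsScalarTower S R R]
    [SMulCommClass S R R] (s : ι → S) (A : ∀ i, Matrix (m i) (m i) R) :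
    piKronecker (fun i => s i • A i) = (∏ i, s i) • piKronecker A := by
  ext f g
  simp [piKronecker, Finset.prod_smul]

variable [DecidableEq ι]

theorem piKronecker_mul [∀ i, Fintype (m i)] (A B : ∀ i, Matrix (m i) (m i) R) :
    piKronecker (A * B) = piKronecker A * piKronecker B := by
  ext f g
  simp [piKronecker, mul_apply, Finset.prod_univ_sum, Finset.prod_mul_distrib]

variable [∀ i, DecidableEq (m i)]

theorem piKronecker_mulSingle_apply (i : ι) (A : Matrix (m i) (m i) R) (f g : ∀ i, m i) :
    piKronecker (Pi.mulSingle i A) f g =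
      if Function.update f i (g i) = g then A (f i) (g i) else 0 := by
  have hfactor : ∀ j ∈ Finset.univ.erase i,
      (Pi.mulSingle i A : ∀ i, Matrix (m i) (m i) R) j (f j) (g j) =
        if f j = g j then 1 else 0 := fun j hj => by
    rw [Pi.mulSingle_eq_of_ne (Finset.ne_of_mem_erase hj)]
    exact one_apply
  rw [piKronecker, of_apply, ← Finset.mul_prod_erase _ _ (Finset.mem_univ i),
    Finset.prod_congr rfl hfactor, Finset.prod_ite_zero, Pi.mulSingle_eq_same]
  simp [Function.update_eq_iff]

theorem transpose_piKronecker_mulSingle (i : ι) (A : Matrix (m i) (m i) R) :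
    (piKronecker (Pi.mulSingle i A))ᵀ = piKronecker (Pi.mulSingle i Aᵀ) := by
  ext f g
  have hupdate : Function.update g i (f i) = f ↔ Function.update f i (g i) = g := by
    simp only [Function.update_eq_iff, true_and, @eq_comm _ (f _)]
  simp only [transpose_apply, piKronecker_mulSingle_apply, hupdate]

variable [∀ i, Fintype (m i)]

theorem piKronecker_mulSingle_mul_apply (i : ι) (A : Matrix (m i) (m i) R)
    (M : Matrix (∀ i, m i) (∀ i, m i) R) (f g : ∀ i, m i) :
    (piKronecker (Pi.mulSingle i A) * M) f g =
      ∑ x, A (f i) x * M (Function.update f i x) g := by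
  simp only [mul_apply, piKronecker_mulSingle_apply, ite_mul, zero_mul, ← Finset.sum_filter]
  refine Finset.sum_nbij' (fun h => h i) (Function.update f i) ?_ ?_ ?_ ?_ ?_ <;>
    simp +contextual

theorem mul_piKronecker_mulSingle_apply (i : ι) (A : Matrix (m i) (m i) R)
    (M : Matrix (∀ i, m i) (∀ i, m i) R) (f g : ∀ i, m i) :
    (M * piKronecker (Pi.mulSingle i A)) f g =
      ∑ x, M f (Function.update g i x) * A x (g i) := by
  rw [← transpose_apply (_ * _), transpose_mul, transpose_piKronecker_mulSingle,
    piKronecker_mulSingle_mul_apply]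
  simp only [transpose_apply, mul_comm]

theorem apply_eq_zero_of_commute_piKronecker_diagonal {S : Type*} [CommRing S] [NoZeroDivisors S]
    {i : ι} {d : m i → S} (hd : Function.Injective d) {M : Matrix (∀ i, m i) (∀ i, m i) S}
    (hM : Commute (piKronecker (Pi.mulSingle i (diagonal d))) M) {f g : ∀ i, m i}
    (hfg : f i ≠ g i) : M f g = 0 := by
  have hentry : d (f i) * M f g = M f g * d (g i) := by
    simpa [piKronecker_mulSingle_mul_apply, mul_piKronecker_mulSingle_apply, diagonal_apply]
      using congr_fun₂ hM.eq f g
  have hprod : (d (f i) - d (g i)) * M f g = 0 := by linear_combination hentry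
  exact (mul_eq_zero.mp hprod).resolve_left (sub_ne_zero.mpr (hd.ne hfg))

theorem apply_update_update_of_commute_piKronecker_permMatrix {i : ι} {σ : Equiv.Perm (m i)}
    {M : Matrix (∀ i, m i) (∀ i, m i) R}
    (hM : Commute (piKronecker (Pi.mulSingle i (σ.permMatrix R))) M) (f : ∀ i, m i) :
    M (Function.update f i (σ (f i))) (Function.update f i (σ (f i))) = M f f := by
  simpa [piKronecker_mulSingle_mul_apply, mul_piKronecker_mulSingle_apply, Equiv.Perm.permMatrix,
    PEquiv.toMatrix_apply, Equiv.toPEquiv_apply]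
    using congr_fun₂ hM.eq f (Function.update f i (σ (f i)))

end PiKronecker

theorem eq_of_forall_update_eq {ι β : Type*} {α : ι → Type*} [Finite ι] [DecidableEq ι]
    {φ : (∀ i, α i) → β} (hφ : ∀ f i x, φ (Function.update f i x) = φ f) (f g : ∀ i, α i) :
    φ f = φ g := by
  have := Fintype.ofFinite ι
  have hpiecewise (s : Finset ι) : φ (s.piecewise f g) = φ g := by
    induction s using Finset.induction_on with
    | empty => rw [Finset.piecewise_empty]
    | insert i s _ ih => rw [Finset.piecewise_insert, hφ, ih]
  simpa only [Finset.piecewise_univ] using hpiecewise Finset.univ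

theorem eq_trace_div_card_smul_one_of_isDiag {m K : Type*} [Fintype m] [DecidableEq m] [Field K]
    (hcard : (Fintype.card m : K) ≠ 0) {M : Matrix m m K} (hM : M.IsDiag)
    (hdiag : ∀ i j, M i i = M j j) : M = (M.trace / Fintype.card m) • (1 : Matrix m m K) := by
  ext i j
  rcases eq_or_ne i j with rfl | hij
  · have htrace : M.trace = Fintype.card m * M i i := by
      simp [trace, fun j => hdiag j i]
    simp [htrace, hcard]
  · simp [hM hij, hij]

section Pauli

theorem pauli_zero : pauli 0 = 1 :=
  one_fin_two.symm

theorem pauli_one : pauli 1 = (Equiv.swap 0 1).permMatrix ℂ := by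
  ext i j
  fin_cases i <;> fin_cases j <;> simp [pauli, Equiv.Perm.permMatrix, PEquiv.toMatrix_apply]

theorem pauli_three : pauli 3 = diagonal ![1, -1] := by
  simp [pauli, diagonal_fin_two]

theorem pauli_mul_self (a : Fin 4) : pauli a * pauli a = 1 := by
  fin_cases a <;> simp [pauli, one_fin_two]

theorem commuteUpToSign_pauli (a b : Fin 4) : CommuteUpToSign (pauli a) (pauli b) := by
  by_cases h : a = 0 ∨ b = 0 ∨ a = b
  · refine ⟨1, ?_⟩
    rcases h with rfl | rfl | rfl <;> simp [pauli_zero]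
  · refine ⟨-1, ?_⟩
    fin_cases a <;> fin_cases b <;> simp [pauli, Units.smul_def] at h ⊢

variable {n : ℕ}

theorem pauliString_eq_piKronecker (a : Fin n → Fin 4) :
    PauliString a = piKronecker fun i => pauli (a i) :=
  rfl

theorem pauliString_mul_self (a : Fin n → Fin 4) : PauliString a * PauliString a = 1 := by
  rw [pauliString_eq_piKronecker, ← piKronecker_mul, ← piKronecker_one]
  exact congr_arg piKronecker (funext fun i => pauli_mul_self (a i))

theorem commuteUpToSign_pauliString (a b : Fin n → Fin 4) :
    CommuteUpToSign (PauliString a) (PauliString b) := by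
  choose s hs using fun i => commuteUpToSign_pauli (a i) (b i)
  refine ⟨∏ i, s i, ?_⟩
  simp only [pauliString_eq_piKronecker, ← piKronecker_mul, ← piKronecker_smul]
  exact congr_arg piKronecker (funext hs)

theorem pauliString_single (i : Fin n) (b : Fin 4) :
    PauliString (Pi.single i b) = piKronecker (Pi.mulSingle i (pauli b)) :=
  congr_arg piKronecker <| funext fun j => by
    rcases eq_or_ne j i with rfl | hj
    · simp
    · simp [hj, pauli_zero]

theorem eq_smul_one_of_commute_pauliString {M : Matrix (Fin n → Fin 2) (Fin n → Fin 2) ℂ}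
    (hX : ∀ i, Commute (PauliString (Pi.single i 1)) M)
    (hZ : ∀ i, Commute (PauliString (Pi.single i 3)) M) :
    M = (M.trace / 2 ^ n) • (1 : Matrix (Fin n → Fin 2) (Fin n → Fin 2) ℂ) := by
  simp only [pauliString_single, pauli_one, pauli_three] at hX hZ
  have hoff : M.IsDiag := fun f g hfg => by
    obtain ⟨i, hi⟩ := Function.ne_iff.mp hfg
    refine apply_eq_zero_of_commute_piKronecker_diagonal ?_ (hZ i) hi
    norm_num [Function.Injective, Fin.forall_fin_two]
  have hflip (f : Fin n → Fin 2) (i x) :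
      M (Function.update f i x) (Function.update f i x) = M f f := by
    obtain rfl | rfl : x = f i ∨ x = Equiv.swap 0 1 (f i) := by
      generalize f i = y
      decide +revert
    · rw [Function.update_eq_self]
    · exact apply_update_update_of_commute_piKronecker_permMatrix (hX i) f
  simpa using eq_trace_div_card_smul_one_of_isDiag (by simp) hoff
    (eq_of_forall_update_eq (φ := fun f => M f f) hflip)

theorem traceless_noise_zero_postselection_general (l : List (Fin n → Fin 4))
    (hX : ∀ i, Pi.single i 1 ∈ l) (hZ : ∀ i, Pi.single i 3 ∈ l)
    (E : Matrix (Fin n → Fin 2) (Fin n → Fin 2) ℂ) :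
    l.foldl (fun M a => checkMap ℂ (PauliString a) M) E = (E.trace / 2 ^ n) • 1 := by
  have hcomm {a : Fin n → Fin 4} (ha : a ∈ l) :=
    commute_foldl_checkMap_of_mem ℂ (pauliString_mul_self a) (commuteUpToSign_pauliString a) ha E
  rw [eq_smul_one_of_commute_pauliString (fun i => hcomm (hX i)) fun i => hcomm (hZ i),
    trace_foldl_checkMap pauliString_mul_self]

end Pauli

theorem traceless_noise_zero_postselection (n : ℕ) (l : List (Fin n → Fin 4))
    (hnd : l.Nodup) (hmem : ∀ a : Fin n → Fin 4, a ∈ l)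
    (E : Matrix (Fin n → Fin 2) (Fin n → Fin 2) ℂ) (hE : Matrix.trace E = 0) :
    l.foldl (fun M a => ((1 : ℂ) / 2) • (PauliString a * M * PauliString a + M)) E = 0 :=
  (traceless_noise_zero_postselection_general l (fun _ => hmem _) (fun _ => hmem _) E).trans
    (by rw [hE, zero_div, zero_smul])
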